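/- Let D ≥ 2, L ≥ 1, N ≥ 1 be integers, let the lattice be the D-dimensional discrete torus (ℤ/Lℤ)^D with K = L^D sites, and let the edge set be E = sites × {1,…,D}. Let μ_N be the product over E of the Haar probability measures on the unitary group U(N), let t be the normalized Wilson action t(U) = (1/K) Σ_{x} Σ_{μ<ν} (1/N) Re Tr(U_{x,ν}† U_{x+ν,μ}† U_{x+μ,ν} U_{x,μ}), and let ρ_N be the pushforward of μ_N under t. Then the rescaled probability measures ρ_N(N·t), i.e. the pushforwards of ρ_N under the map t ↦ N·t (equivalently, the pushforwards of μ_N under N·t), converge weakly as N → ∞ to the centered Gaussian measure on ℝ with density √(2K/(π D(D−1))) · exp(−2K t²/(D(D−1))), i.e. the Gaussian with mean 0 and variance D(D−1)/(4K). -/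

import Mathlib

open MeasureTheory Matrix Finset Filter ProbabilityTheory
open scoped NNReal

noncomputable section

/-- Borel measurable structure on the unitary group `U(N)`. -/
instance (N : ℕ) : MeasurableSpace (Matrix.unitaryGroup (Fin N) ℂ) := borel _

instance (N : ℕ) : BorelSpace (Matrix.unitaryGroup (Fin N) ℂ) := ⟨rfl⟩

/-- Sites of the `D`-dimensional periodic lattice of side `L`: the discrete torus `(ℤ/Lℤ)^D`. -/
abbrev Site (D L : ℕ) := Fin D → ZMod L

/-- Edges: a site together with a positive coordinate direction. -/
abbrev Edge (D L : ℕ) := Site D L × Fin D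

/-- Lattice gauge configurations: a unitary matrix `U_{x,μ} ∈ U(N)` on every edge. -/
abbrev Conf (D L N : ℕ) := Edge D L → Matrix.unitaryGroup (Fin N) ℂ

/-- The site displaced one step from `x` in direction `μ`. -/
def shift {D L : ℕ} (x : Site D L) (μ : Fin D) : Site D L :=
  Function.update x μ (x μ + 1)

/-- The normalized Wilson action
`t(U) = (1/K) Σ_x Σ_{μ<ν} (1/N) Re Tr (U_{x,ν}† U_{x+ν,μ}† U_{x+μ,ν} U_{x,μ})`, with `K = L^D`. -/
def wilsonAction (D L N : ℕ) [NeZero L] (U : Conf D L N) : ℝ :=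
  ((L : ℝ) ^ D)⁻¹ *
    ∑ x : Site D L, ∑ p ∈ Finset.univ.filter (fun p : Fin D × Fin D => p.1 < p.2),
      (N : ℝ)⁻¹ *
        (Matrix.trace ((U (x, p.2) : Matrix (Fin N) (Fin N) ℂ)ᴴ
          * (U (shift x p.2, p.1) : Matrix (Fin N) (Fin N) ℂ)ᴴ
          * (U (shift x p.1, p.2) : Matrix (Fin N) (Fin N) ℂ)
          * (U (x, p.1) : Matrix (Fin N) (Fin N) ℂ))).re

/-- The product over all edges of the measure `haarU` on `U(N)`. -/
def confMeasure (D L N : ℕ) [NeZero L]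
    (haarU : Measure (Matrix.unitaryGroup (Fin N) ℂ)) : Measure (Conf D L N) :=
  Measure.pi fun _ => haarU

/-! ### The compact group of configurations -/

section UnitaryConfigurations

instance (N : ℕ) : CompactSpace (Matrix.unitaryGroup (Fin N) ℂ) := by
  have hball : IsCompact {M : Matrix (Fin N) (Fin N) ℂ |
      ∀ i ∈ Set.univ, ∀ j ∈ Set.univ, M i j ∈ Metric.closedBall (0 : ℂ) 1} :=
    isCompact_univ_pi (X := fun _ : Fin N => Fin N → ℂ) fun _ =>
      isCompact_univ_pi fun _ => isCompact_closedBall _ _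
  refine isCompact_iff_compactSpace.1 (hball.of_isClosed_subset
    (isClosed_unitary (R := Matrix (Fin N) (Fin N) ℂ)) fun M hM i _ j _ => ?_)
  simpa using entry_norm_bound_of_unitary hM i j

instance (N : ℕ) : SecondCountableTopology (Matrix (Fin N) (Fin N) ℂ) :=
  inferInstanceAs (SecondCountableTopology (Fin N → Fin N → ℂ))

instance (N : ℕ) : SecondCountableTopology (Matrix.unitaryGroup (Fin N) ℂ) :=
  TopologicalSpace.Subtype.secondCountableTopology _

end UnitaryConfigurations

/-! ### Words in the edge variables -/

section Words

variable {ι : Type*} {N : ℕ}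

/-- The matrix obtained by evaluating a free group element at a family of unitaries. -/
def wordMatrix (U : ι → Matrix.unitaryGroup (Fin N) ℂ) (g : FreeGroup ι) :
    Matrix (Fin N) (Fin N) ℂ :=
  (FreeGroup.lift U g : Matrix.unitaryGroup (Fin N) ℂ)

/-- The trace of a word in a family of unitaries. -/
def wordTrace (U : ι → Matrix.unitaryGroup (Fin N) ℂ) (g : FreeGroup ι) : ℂ :=
  (wordMatrix U g).trace

lemma wordMatrix_mul (U : ι → Matrix.unitaryGroup (Fin N) ℂ) (g h : FreeGroup ι) :
    wordMatrix U (g * h) = wordMatrix U g * wordMatrix U h := by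
  simp [wordMatrix]

lemma wordMatrix_one (U : ι → Matrix.unitaryGroup (Fin N) ℂ) : wordMatrix U 1 = 1 := by
  simp [wordMatrix]

lemma wordMatrix_inv (U : ι → Matrix.unitaryGroup (Fin N) ℂ) (g : FreeGroup ι) :
    wordMatrix U g⁻¹ = (wordMatrix U g)ᴴ := by
  simp only [wordMatrix, map_inv]
  rfl

lemma wordTrace_one (U : ι → Matrix.unitaryGroup (Fin N) ℂ) : wordTrace U 1 = N := by
  simp [wordTrace, wordMatrix_one]

lemma wordTrace_inv (U : ι → Matrix.unitaryGroup (Fin N) ℂ) (g : FreeGroup ι) :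
    wordTrace U g⁻¹ = starRingEnd ℂ (wordTrace U g) := by
  simp [wordTrace, wordMatrix_inv, Matrix.trace_conjTranspose]

lemma wordTrace_mul_comm (U : ι → Matrix.unitaryGroup (Fin N) ℂ) (g h : FreeGroup ι) :
    wordTrace U (g * h) = wordTrace U (h * g) := by
  simp [wordTrace, wordMatrix_mul, Matrix.trace_mul_comm (wordMatrix U g)]

lemma norm_wordTrace_le (U : ι → Matrix.unitaryGroup (Fin N) ℂ) (g : FreeGroup ι) :
    ‖wordTrace U g‖ ≤ N := by
  calc ‖wordTrace U g‖ ≤ ∑ i, ‖wordMatrix U g i i‖ :=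
        norm_sum_le Finset.univ fun i => wordMatrix U g i i
    _ ≤ ∑ _i : Fin N, (1 : ℝ) := Finset.sum_le_sum fun i _ =>
        entry_norm_bound_of_unitary (FreeGroup.lift U g).2 i i
    _ = N := by simp

lemma continuous_wordMatrix (g : FreeGroup ι) :
    Continuous fun U : ι → Matrix.unitaryGroup (Fin N) ℂ => wordMatrix U g := by
  unfold wordMatrix
  refine continuous_subtype_val.comp ?_
  induction g using FreeGroup.induction_on with
  | C1 => simpa using continuous_const
  | of i => simpa using continuous_apply i
  | inv_of i h =>
    simp only [map_inv]
    exact h.inv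
  | mul x y hx hy =>
    simp only [map_mul]
    exact hx.mul hy

lemma continuous_wordMatrix_apply (g : FreeGroup ι) (i j : Fin N) :
    Continuous fun U : ι → Matrix.unitaryGroup (Fin N) ℂ => wordMatrix U g i j :=
  (continuous_wordMatrix g).matrix_elem i j

@[fun_prop]
lemma continuous_wordTrace (g : FreeGroup ι) :
    Continuous fun U : ι → Matrix.unitaryGroup (Fin N) ℂ => wordTrace U g :=
  (continuous_wordMatrix g).matrix_trace

variable [DecidableEq ι]

/-- The signed ways of cutting a word at an occurrence of the letter `e`: immediately before
an occurrence of `e`, with sign `1`, or immediately after one of `e⁻¹`, with sign `-1`. -/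
def cuts (e : ι) : List (ι × Bool) → List (ℂ × List (ι × Bool) × List (ι × Bool))
  | [] => []
  | l :: w => (if l.1 = e then [bif l.2 then (1, [], l :: w) else (-1, [l], w)] else []) ++
      (cuts e w).map fun c => (c.1, l :: c.2.1, c.2.2)

lemma append_eq_of_mem_cuts {e : ι} {w : List (ι × Bool)}
    {c : ℂ × List (ι × Bool) × List (ι × Bool)} (hc : c ∈ cuts e w) : c.2.1 ++ c.2.2 = w := by
  induction w generalizing c with
  | nil => simp [cuts] at hc
  | cons l w ih =>
    rw [cuts, List.mem_append, List.mem_map] at hc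
    rcases hc with hc | ⟨d, hd, rfl⟩
    · split_ifs at hc
      · cases h : l.2 <;> simp [h] at hc <;> simp [hc]
      · simp at hc
    · simpa using ih hd

lemma norm_sign_of_mem_cuts {e : ι} {w : List (ι × Bool)}
    {c : ℂ × List (ι × Bool) × List (ι × Bool)} (hc : c ∈ cuts e w) : ‖c.1‖ = 1 := by
  induction w generalizing c with
  | nil => simp [cuts] at hc
  | cons l w ih =>
    rw [cuts, List.mem_append, List.mem_map] at hc
    rcases hc with hc | ⟨d, hd, rfl⟩
    · split_ifs at hc
      · cases h : l.2 <;> simp [h] at hc <;> simp [hc]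
      · simp at hc
    · simpa using ih hd

lemma getLast?_of_mem_cuts_of_right_eq_nil {e : ι} {w : List (ι × Bool)}
    {c : ℂ × List (ι × Bool) × List (ι × Bool)} (hc : c ∈ cuts e w) (h0 : c.2.2 = []) :
    w.getLast? = some (e, false) := by
  induction w generalizing c with
  | nil => simp [cuts] at hc
  | cons l w ih =>
    rw [cuts, List.mem_append, List.mem_map] at hc
    rcases hc with hc | ⟨d, hd, rfl⟩
    · split_ifs at hc with he
      · cases h : l.2
        · simp [h] at hc
          subst hc
          simp only at h0
          simp [h0, Prod.ext_iff, he, h]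
        · simp [h] at hc
          simp [hc] at h0
      · simp at hc
    · have := ih hd h0
      rw [List.getLast?_cons, this]
      rfl

/-- The derivative of `wordMatrix U (FreeGroup.mk w)` when the unitary at `e` is moved
infinitesimally along `X`. -/
def wordMatrixDeriv (e : ι) (w : List (ι × Bool)) (U : ι → Matrix.unitaryGroup (Fin N) ℂ)
    (X : Matrix (Fin N) (Fin N) ℂ) : Matrix (Fin N) (Fin N) ℂ :=
  ((cuts e w).map fun c =>
    c.1 • (wordMatrix U (FreeGroup.mk c.2.1) * X * wordMatrix U (FreeGroup.mk c.2.2))).sum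

/-- The one-parameter group of unitaries generated by a skew-Hermitian matrix. -/
def skewExp (X : Matrix (Fin N) (Fin N) ℂ) (hX : Xᴴ = -X) (t : ℝ) :
    Matrix.unitaryGroup (Fin N) ℂ :=
  ⟨NormedSpace.exp (t • X), by
    rw [Matrix.mem_unitaryGroup_iff, Matrix.star_eq_conjTranspose, ← Matrix.exp_conjTranspose,
      ← Matrix.exp_add_of_commute]
    · simp [hX]
    · simp [hX]⟩

lemma skewExp_add (X : Matrix (Fin N) (Fin N) ℂ) (hX : Xᴴ = -X) (s t : ℝ) :
    skewExp X hX (s + t) = skewExp X hX s * skewExp X hX t := by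
  apply Subtype.ext
  change NormedSpace.exp ((s + t) • X) = NormedSpace.exp (s • X) * NormedSpace.exp (t • X)
  rw [add_smul, Matrix.exp_add_of_commute]
  exact ((Commute.refl X).smul_left s).smul_right t

lemma skewExp_zero (X : Matrix (Fin N) (Fin N) ℂ) (hX : Xᴴ = -X) : skewExp X hX 0 = 1 := by
  apply Subtype.ext
  simp [skewExp]

lemma skewExp_inv (X : Matrix (Fin N) (Fin N) ℂ) (hX : Xᴴ = -X) (t : ℝ) :
    (skewExp X hX t)⁻¹ = skewExp X hX (-t) := by
  rw [inv_eq_iff_mul_eq_one, ← skewExp_add, add_neg_cancel, skewExp_zero]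

open scoped Matrix.Norms.Operator in
lemma hasDerivAt_skewExp_apply (X : Matrix (Fin N) (Fin N) ℂ) (hX : Xᴴ = -X) (i j : Fin N) :
    HasDerivAt (fun t => (skewExp X hX t : Matrix (Fin N) (Fin N) ℂ) i j) (X i j) 0 := by
  have h := hasDerivAt_exp_smul_const (𝕂 := ℝ) X 0
  rw [zero_smul, NormedSpace.exp_zero, one_mul] at h
  exact hasDerivAt_pi.1 (hasDerivAt_pi.1 h i) j

lemma hasDerivAt_matrix_mul_apply {A B : ℝ → Matrix (Fin N) (Fin N) ℂ}
    {A' B' : Matrix (Fin N) (Fin N) ℂ} {t : ℝ}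
    (hA : ∀ i j, HasDerivAt (fun s => A s i j) (A' i j) t)
    (hB : ∀ i j, HasDerivAt (fun s => B s i j) (B' i j) t) (i j : Fin N) :
    HasDerivAt (fun s => (A s * B s) i j) ((A' * B t + A t * B') i j) t := by
  simp only [Matrix.mul_apply, Matrix.add_apply, ← Finset.sum_add_distrib]
  exact HasDerivAt.fun_sum fun k _ => (hA i k).mul (hB k j)

lemma hasDerivAt_letterMatrix_apply (e : ι) (l : ι × Bool)
    (U : ι → Matrix.unitaryGroup (Fin N) ℂ) (X : Matrix (Fin N) (Fin N) ℂ) (hX : Xᴴ = -X)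
    (i j : Fin N) :
    HasDerivAt (fun t => wordMatrix (Pi.mulSingle e (skewExp X hX t) * U) (FreeGroup.mk [l]) i j)
      ((if l.1 = e then bif l.2 then X * wordMatrix U (FreeGroup.mk [l])
        else -(wordMatrix U (FreeGroup.mk [l]) * X) else 0) i j) 0 := by
  have hconst : ∀ (M : Matrix (Fin N) (Fin N) ℂ) (i j : Fin N),
      HasDerivAt (fun _ : ℝ => M i j) ((0 : Matrix (Fin N) (Fin N) ℂ) i j) 0 :=
    fun M i j => hasDerivAt_const _ _
  obtain ⟨k, b⟩ := l
  by_cases hk : k = e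
  · subst hk
    cases b
    · have hneg : ∀ i j, HasDerivAt
          (fun t => (skewExp X hX (-t) : Matrix (Fin N) (Fin N) ℂ) i j) ((-X) i j) 0 := by
        intro i j
        simpa [Function.comp_def] using
          (hasDerivAt_skewExp_apply X hX i j).scomp_of_eq (0 : ℝ) (hasDerivAt_neg (0 : ℝ))
            (by simp)
      have := hasDerivAt_matrix_mul_apply
        (hconst ((U k)⁻¹ : Matrix.unitaryGroup (Fin N) ℂ)) hneg i j
      simpa [wordMatrix, FreeGroup.lift_mk, skewExp_inv] using this
    · have := hasDerivAt_matrix_mul_apply (hasDerivAt_skewExp_apply X hX) (hconst (U k).1) i j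
      simpa [wordMatrix, FreeGroup.lift_mk] using this
  · simpa [wordMatrix, FreeGroup.lift_mk, hk] using hasDerivAt_const (0 : ℝ) _

lemma hasDerivAt_wordMatrix_apply (e : ι) (w : List (ι × Bool))
    (U : ι → Matrix.unitaryGroup (Fin N) ℂ) (X : Matrix (Fin N) (Fin N) ℂ) (hX : Xᴴ = -X)
    (i j : Fin N) :
    HasDerivAt (fun t => wordMatrix (Pi.mulSingle e (skewExp X hX t) * U) (FreeGroup.mk w) i j)
      (wordMatrixDeriv e w U X i j) 0 := by
  induction w generalizing i j with
  | nil =>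
    simpa [wordMatrixDeriv, cuts, ← FreeGroup.one_eq_mk, wordMatrix_one] using
      hasDerivAt_const (0 : ℝ) ((1 : Matrix (Fin N) (Fin N) ℂ) i j)
  | cons l w ih =>
    have hcons : ∀ v : List (ι × Bool), FreeGroup.mk (l :: v)
        = FreeGroup.mk [l] * FreeGroup.mk v := fun v => by simp
    have h0 : Pi.mulSingle e (skewExp X hX 0) * U = U := by simp [skewExp_zero]
    have key := hasDerivAt_matrix_mul_apply (hasDerivAt_letterMatrix_apply e l U X hX) ih i j
    simp only [hcons w, wordMatrix_mul]
    convert key using 1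
    rw [h0]
    refine congrFun (congrFun ?_ i) j
    simp only [wordMatrixDeriv, cuts, List.map_append, List.sum_append, List.map_map]
    congr 1
    · split_ifs with hl
      · cases l.2
        · simp
        · rw [cond_true, cond_true, mul_assoc, ← wordMatrix_mul, ← hcons w]
          simp [← FreeGroup.one_eq_mk, wordMatrix_one]
      · simp
    · rw [← List.sum_map_mul_left]
      refine congrArg List.sum (List.map_congr_left fun c _ => ?_)
      simp only [Function.comp_apply, hcons c.2.1, wordMatrix_mul]
      simp [mul_assoc]

end Words

/-! ### Integration by parts on the unitary group -/

section IntegrationByParts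

variable {ι : Type*} [DecidableEq ι] {N : ℕ}

lemma wordMatrixDeriv_add (e : ι) (w : List (ι × Bool)) (U : ι → Matrix.unitaryGroup (Fin N) ℂ)
    (X Y : Matrix (Fin N) (Fin N) ℂ) :
    wordMatrixDeriv e w U (X + Y) = wordMatrixDeriv e w U X + wordMatrixDeriv e w U Y := by
  simp [wordMatrixDeriv, mul_add, add_mul, List.sum_map_add]

lemma wordMatrixDeriv_smul (e : ι) (w : List (ι × Bool)) (U : ι → Matrix.unitaryGroup (Fin N) ℂ)
    (z : ℂ) (X : Matrix (Fin N) (Fin N) ℂ) :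
    wordMatrixDeriv e w U (z • X) = z • wordMatrixDeriv e w U X := by
  rw [wordMatrixDeriv, wordMatrixDeriv, List.smul_sum, List.map_map]
  refine congrArg List.sum (List.map_congr_left fun c _ => ?_)
  simp [smul_comm z]

lemma continuous_wordMatrixDeriv (e : ι) (w : List (ι × Bool)) (X : Matrix (Fin N) (Fin N) ℂ) :
    Continuous fun U : ι → Matrix.unitaryGroup (Fin N) ℂ => wordMatrixDeriv e w U X := by
  unfold wordMatrixDeriv
  refine continuous_list_sum _ fun c _ => ?_
  have h : Continuous fun U : ι → Matrix.unitaryGroup (Fin N) ℂ =>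
      wordMatrix U (FreeGroup.mk c.2.1) * X * wordMatrix U (FreeGroup.mk c.2.2) :=
    ((continuous_wordMatrix _).mul continuous_const).mul (continuous_wordMatrix _)
  exact h.const_smul c.1

/-- A derivative along left translations by a curve through `1` integrates to zero. -/
lemma integral_eq_zero_of_hasDerivAt_mul_left {G : Type*} [Group G] [TopologicalSpace G]
    [IsTopologicalGroup G] [CompactSpace G] [MeasurableSpace G] [BorelSpace G]
    (P : Measure G) [IsProbabilityMeasure P] [P.IsMulLeftInvariant]
    {f f' : G → ℂ} (hf : Continuous f) (hf' : Continuous f') {γ : ℝ → G} (hγ : γ 0 = 1)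
    (hderiv : ∀ (U : G) (t : ℝ), HasDerivAt (fun s => f (γ s * U)) (f' (γ t * U)) t) :
    ∫ U, f' U ∂P = 0 := by
  obtain ⟨C, hC⟩ := isCompact_univ.exists_bound_of_continuousOn hf'.continuousOn
  have hshift : ∀ {h : G → ℂ}, Continuous h → ∀ t : ℝ, Continuous fun U => h (γ t * U) :=
    fun hh t => hh.comp (continuous_const_mul _)
  have hint := (hasDerivAt_integral_of_dominated_loc_of_deriv_le
    (μ := P) (x₀ := (0 : ℝ)) (s := Set.univ) (bound := fun _ => C)
    (F := fun t U => f (γ t * U)) (F' := fun t U => f' (γ t * U)) Filter.univ_mem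
    (Filter.Eventually.of_forall fun t => (hshift hf t).aestronglyMeasurable)
    ((hshift hf 0).integrable_of_hasCompactSupport (HasCompactSupport.of_compactSpace _))
    (hshift hf' 0).aestronglyMeasurable
    (Filter.Eventually.of_forall fun U t _ => hC _ (Set.mem_univ _))
    (integrable_const C) (Filter.Eventually.of_forall fun U t _ => hderiv U t)).2
  simp only [integral_mul_left_eq_self f] at hint
  simpa [hγ] using hint.unique (hasDerivAt_const (0 : ℝ) _)

/-- `f` is a continuous function of a family of unitaries, and `f'` is the complex-linear
extension of its derivative under left translation of the unitary at `e`. -/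
structure HasEdgeDeriv (e : ι) (f : (ι → Matrix.unitaryGroup (Fin N) ℂ) → ℂ)
    (f' : (ι → Matrix.unitaryGroup (Fin N) ℂ) → Matrix (Fin N) (Fin N) ℂ →ₗ[ℂ] ℂ) : Prop where
  continuous : Continuous f
  continuous_deriv : ∀ X, Continuous fun U => f' U X
  hasDerivAt : ∀ U X (hX : Xᴴ = -X),
    HasDerivAt (fun t => f (Pi.mulSingle e (skewExp X hX t) * U)) (f' U X) 0

namespace HasEdgeDeriv

variable {e : ι} {f g : (ι → Matrix.unitaryGroup (Fin N) ℂ) → ℂ}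
  {f' g' : (ι → Matrix.unitaryGroup (Fin N) ℂ) → Matrix (Fin N) (Fin N) ℂ →ₗ[ℂ] ℂ}

lemma mul (hf : HasEdgeDeriv e f f') (hg : HasEdgeDeriv e g g') :
    HasEdgeDeriv e (fun U => f U * g U) (fun U => g U • f' U + f U • g' U) where
  continuous := hf.continuous.mul hg.continuous
  continuous_deriv X := by
    exact (hg.continuous.mul (hf.continuous_deriv X)).add
      (hf.continuous.mul (hg.continuous_deriv X))
  hasDerivAt U X hX := by
    simpa [skewExp_zero, mul_comm] using (hf.hasDerivAt U X hX).fun_mul (hg.hasDerivAt U X hX)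

lemma const_mul (z : ℂ) (hf : HasEdgeDeriv e f f') :
    HasEdgeDeriv e (fun U => z * f U) (fun U => z • f' U) where
  continuous := continuous_const.mul hf.continuous
  continuous_deriv X := continuous_const.mul (hf.continuous_deriv X)
  hasDerivAt U X hX := by simpa using (hf.hasDerivAt U X hX).const_mul z

lemma sum {κ : Type*} (s : Finset κ) {F : κ → (ι → Matrix.unitaryGroup (Fin N) ℂ) → ℂ}
    {F' : κ → (ι → Matrix.unitaryGroup (Fin N) ℂ) → Matrix (Fin N) (Fin N) ℂ →ₗ[ℂ] ℂ}
    (h : ∀ k ∈ s, HasEdgeDeriv e (F k) (F' k)) :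
    HasEdgeDeriv e (fun U => ∑ k ∈ s, F k U) (fun U => ∑ k ∈ s, F' k U) where
  continuous := continuous_finsetSum s fun k hk => (h k hk).continuous
  continuous_deriv X := by
    simpa using continuous_finsetSum s fun k hk => (h k hk).continuous_deriv X
  hasDerivAt U X hX := by
    simpa using HasDerivAt.fun_sum fun k hk => (h k hk).hasDerivAt U X hX

lemma cexp (hf : HasEdgeDeriv e f f') :
    HasEdgeDeriv e (fun U => Complex.exp (f U)) (fun U => Complex.exp (f U) • f' U) where
  continuous := Complex.continuous_exp.comp hf.continuous
  continuous_deriv X := by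
    exact (Complex.continuous_exp.comp hf.continuous).mul (hf.continuous_deriv X)
  hasDerivAt U X hX := by
    simpa [skewExp_zero] using (hf.hasDerivAt U X hX).cexp

lemma wordMatrix_apply (e : ι) (w : List (ι × Bool)) (i j : Fin N) :
    HasEdgeDeriv e (fun U => wordMatrix U (FreeGroup.mk w) i j) (fun U =>
      { toFun := fun X => wordMatrixDeriv e w U X i j
        map_add' := fun X Y => by simp [wordMatrixDeriv_add]
        map_smul' := fun z X => by simp [wordMatrixDeriv_smul] }) where
  continuous := continuous_wordMatrix_apply _ i j
  continuous_deriv X := (continuous_wordMatrixDeriv e w X).matrix_elem i j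
  hasDerivAt U X hX := hasDerivAt_wordMatrix_apply e w U X hX i j

lemma wordTrace (e : ι) (w : List (ι × Bool)) :
    HasEdgeDeriv (N := N) e (fun U => wordTrace U (FreeGroup.mk w)) (fun U =>
      { toFun := fun X => (wordMatrixDeriv e w U X).trace
        map_add' := fun X Y => by simp [wordMatrixDeriv_add]
        map_smul' := fun z X => by simp [wordMatrixDeriv_smul] }) where
  continuous := continuous_wordTrace _
  continuous_deriv X := (continuous_wordMatrixDeriv e w X).matrix_trace
  hasDerivAt U X hX :=
    HasDerivAt.fun_sum (u := Finset.univ) fun i _ => hasDerivAt_wordMatrix_apply e w U X hX i i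

lemma hasDerivAt_of_time (hf : HasEdgeDeriv e f f') (U : ι → Matrix.unitaryGroup (Fin N) ℂ)
    (X : Matrix (Fin N) (Fin N) ℂ) (hX : Xᴴ = -X) (t : ℝ) :
    HasDerivAt (fun s => f (Pi.mulSingle e (skewExp X hX s) * U))
      (f' (Pi.mulSingle e (skewExp X hX t) * U) X) t := by
  have h := (hf.hasDerivAt (Pi.mulSingle e (skewExp X hX t) * U) X hX).scomp_of_eq t
    ((hasDerivAt_id t).sub_const t) (by simp)
  rw [one_smul] at h
  refine h.congr_of_eventuallyEq (Filter.Eventually.of_forall fun s => ?_)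
  simp only [Function.comp_apply, id, ← mul_assoc, ← Pi.mulSingle_mul, ← skewExp_add]
  simp

variable [Fintype ι] (μ : Measure (Matrix.unitaryGroup (Fin N) ℂ)) [μ.IsHaarMeasure]
  [IsProbabilityMeasure μ]

lemma integral_deriv_eq_zero_of_skew (hf : HasEdgeDeriv e f f')
    (X : Matrix (Fin N) (Fin N) ℂ) (hX : Xᴴ = -X) :
    ∫ U, f' U X ∂(Measure.pi fun _ : ι => μ) = 0 := by
  refine integral_eq_zero_of_hasDerivAt_mul_left _ hf.continuous (hf.continuous_deriv X)
    (γ := fun t => Pi.mulSingle e (skewExp X hX t)) ?_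
    fun U t => hf.hasDerivAt_of_time U X hX t
  simp [skewExp_zero]

/-- **Integration by parts** for the Haar measure. -/
lemma integral_deriv_eq_zero (hf : HasEdgeDeriv e f f') (X : Matrix (Fin N) (Fin N) ℂ) :
    ∫ U, f' U X ∂(Measure.pi fun _ : ι => μ) = 0 := by
  have hskew : ∀ Y : Matrix (Fin N) (Fin N) ℂ, (Y - Yᴴ)ᴴ = -(Y - Yᴴ) := fun Y => by simp
  have hX : X = (1 / 2 : ℂ) • (X - Xᴴ) +
      (-Complex.I / 2) • ((Complex.I • X) - (Complex.I • X)ᴴ) := by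
    have hI : Complex.I * Complex.I = -1 := Complex.I_mul_I
    ext i j
    simp
    linear_combination (X i j / 2 + starRingEnd ℂ (X j i) / 2) * hI
  have hint : ∀ Y, Integrable (fun U => f' U Y) (Measure.pi fun _ : ι => μ) := fun Y =>
    (hf.continuous_deriv Y).integrable_of_hasCompactSupport (HasCompactSupport.of_compactSpace _)
  rw [hX]
  simp only [map_add, map_smul, smul_eq_mul]
  rw [integral_add ((hint _).const_mul _) ((hint _).const_mul _), integral_const_mul,
    integral_const_mul, hf.integral_deriv_eq_zero_of_skew μ _ (hskew X),
    hf.integral_deriv_eq_zero_of_skew μ _ (hskew _)]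
  simp

end HasEdgeDeriv

/-- The signed sum of the products of traces obtained by splitting `w` at the letter `e`. -/
def splitSum (e : ι) (w : List (ι × Bool)) (U : ι → Matrix.unitaryGroup (Fin N) ℂ) : ℂ :=
  ((cuts e w).map fun c =>
    c.1 * (wordTrace U (FreeGroup.mk c.2.1) * wordTrace U (FreeGroup.mk c.2.2))).sum

/-- The signed sum of the traces obtained by inserting `w` into `v` at the letter `e`. -/
def mergeSum (e : ι) (w v : List (ι × Bool)) (U : ι → Matrix.unitaryGroup (Fin N) ℂ) : ℂ :=
  ((cuts e v).map fun c =>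
    c.1 * wordTrace U (FreeGroup.mk w * (FreeGroup.mk c.2.2 * FreeGroup.mk c.2.1))).sum

lemma continuous_mergeSum (e : ι) (w v : List (ι × Bool)) :
    Continuous (mergeSum (N := N) e w v) :=
  continuous_list_sum _ fun _ _ => continuous_const.mul (continuous_wordTrace _)

lemma sum_mul_single_mul_apply (A B : Matrix (Fin N) (Fin N) ℂ) :
    ∑ i, ∑ j, (A * Matrix.single i j (1 : ℂ) * B : Matrix (Fin N) (Fin N) ℂ) i j =
      A.trace * B.trace := by
  simp only [Matrix.trace, Matrix.diag_apply, Finset.sum_mul_sum]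
  refine Finset.sum_congr rfl fun i _ => Finset.sum_congr rfl fun j _ => ?_
  rw [Matrix.mul_assoc, Matrix.mul_apply, Finset.sum_eq_single i]
  · simp
  · intro k _ hk
    simp [Matrix.single_mul_apply_of_ne _ _ _ _ _ hk]
  · simp

lemma sum_apply_mul_trace_mul_single_mul (M A B : Matrix (Fin N) (Fin N) ℂ) :
    ∑ i, ∑ j, M i j * (A * Matrix.single i j (1 : ℂ) * B).trace = (M * (B * A)).trace := by
  have h : ∀ i j, (A * Matrix.single i j (1 : ℂ) * B).trace = (B * A) j i := fun i j => by
    rw [Matrix.trace_mul_comm, ← Matrix.mul_assoc, Matrix.trace_mul_single]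
    simp
  simp only [h]
  exact Finset.sum_congr rfl fun i _ => (Matrix.mul_apply (M := M)).symm

lemma sum_wordMatrixDeriv_single_apply (e : ι) (w : List (ι × Bool))
    (U : ι → Matrix.unitaryGroup (Fin N) ℂ) :
    ∑ i, ∑ j, wordMatrixDeriv e w U (Matrix.single i j 1) i j = splitSum e w U := by
  unfold wordMatrixDeriv splitSum
  induction cuts e w with
  | nil => simp
  | cons c l ih =>
    simp only [List.map_cons, List.sum_cons, Matrix.add_apply, Finset.sum_add_distrib, ih,
      Matrix.smul_apply, ← Finset.mul_sum, sum_mul_single_mul_apply, smul_eq_mul]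
    rfl

lemma sum_wordMatrix_mul_trace_wordMatrixDeriv (e : ι) (w v : List (ι × Bool))
    (U : ι → Matrix.unitaryGroup (Fin N) ℂ) :
    ∑ i, ∑ j, wordMatrix U (FreeGroup.mk w) i j *
      (wordMatrixDeriv e v U (Matrix.single i j 1)).trace = mergeSum e w v U := by
  unfold wordMatrixDeriv mergeSum
  induction cuts e v with
  | nil => simp
  | cons c l ih =>
    simp only [List.map_cons, List.sum_cons, Matrix.trace_add, mul_add, Finset.sum_add_distrib,
      ih, Matrix.trace_smul, smul_eq_mul, mul_left_comm _ c.1, ← Finset.mul_sum,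
      sum_apply_mul_trace_mul_single_mul, wordTrace, wordMatrix_mul]

variable [Fintype ι] (μ : Measure (Matrix.unitaryGroup (Fin N) ℂ)) [μ.IsHaarMeasure]
  [IsProbabilityMeasure μ]

lemma HasEdgeDeriv.integral_splitSum_mul_add {e : ι}
    {f : (ι → Matrix.unitaryGroup (Fin N) ℂ) → ℂ}
    {f' : (ι → Matrix.unitaryGroup (Fin N) ℂ) → Matrix (Fin N) (Fin N) ℂ →ₗ[ℂ] ℂ}
    (hf : HasEdgeDeriv e f f') (w : List (ι × Bool)) :
    ∫ U, (f U * splitSum e w U + ∑ i, ∑ j, wordMatrix U (FreeGroup.mk w) i j *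
      f' U (Matrix.single i j 1)) ∂(Measure.pi fun _ : ι => μ) = 0 := by
  have hd := fun i j => (HasEdgeDeriv.wordMatrix_apply e w i j).mul hf
  have hsum : ∀ U, f U * splitSum e w U + ∑ i, ∑ j, wordMatrix U (FreeGroup.mk w) i j *
      f' U (Matrix.single i j 1) = ∑ i, ∑ j,
        (f U * wordMatrixDeriv e w U (Matrix.single i j 1) i j +
          wordMatrix U (FreeGroup.mk w) i j * f' U (Matrix.single i j 1)) := fun U => by
    simp only [Finset.sum_add_distrib, ← Finset.mul_sum, sum_wordMatrixDeriv_single_apply]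
  have hint : ∀ i j, Integrable (fun U =>
      f U * wordMatrixDeriv e w U (Matrix.single i j 1) i j +
        wordMatrix U (FreeGroup.mk w) i j * f' U (Matrix.single i j 1))
      (Measure.pi fun _ : ι => μ) := fun i j =>
    ((hd i j).continuous_deriv (Matrix.single i j 1)).integrable_of_hasCompactSupport
      (HasCompactSupport.of_compactSpace _)
  simp only [hsum]
  rw [integral_finsetSum _ fun i _ => integrable_finsetSum _ fun j _ => hint i j]
  refine Finset.sum_eq_zero fun i _ => ?_
  rw [integral_finsetSum _ fun j _ => hint i j]
  exact Finset.sum_eq_zero fun j _ => (hd i j).integral_deriv_eq_zero μ (Matrix.single i j 1)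

/-- **Schwinger–Dyson equation** with a trace as test function. -/
lemma integral_wordTrace_mul_splitSum_add (e : ι) (w v : List (ι × Bool)) :
    ∫ U, (wordTrace U (FreeGroup.mk v) * splitSum e w U + mergeSum e w v U)
      ∂(Measure.pi fun _ : ι => μ) = 0 := by
  simpa [sum_wordMatrix_mul_trace_wordMatrixDeriv] using
    (HasEdgeDeriv.wordTrace e v).integral_splitSum_mul_add μ w

/-- **Schwinger–Dyson equation** with the exponential of a sum of traces as test function. -/
lemma integral_cexp_mul_splitSum_add {κ : Type*} (s : Finset κ) (z : ℂ)
    (v : κ → List (ι × Bool)) (e : ι) (w : List (ι × Bool)) :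
    ∫ U, Complex.exp (z * ∑ k ∈ s, wordTrace U (FreeGroup.mk (v k))) *
      (splitSum e w U + z * ∑ k ∈ s, mergeSum e w (v k) U) ∂(Measure.pi fun _ : ι => μ) = 0 := by
  have h := ((HasEdgeDeriv.sum s fun k _ =>
    HasEdgeDeriv.wordTrace (N := N) e (v k)).const_mul z).cexp.integral_splitSum_mul_add μ w
  rw [← h]
  refine integral_congr_ae (Filter.Eventually.of_forall fun U => ?_)
  simp only [← sum_wordMatrix_mul_trace_wordMatrixDeriv, mul_add, LinearMap.smul_apply,
    LinearMap.coe_sum, Finset.sum_apply, LinearMap.coe_mk, AddHom.coe_mk, smul_eq_mul]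
  congr 1
  simp only [Finset.mul_sum]
  rw [Finset.sum_comm]
  refine Finset.sum_congr rfl fun i _ => ?_
  rw [Finset.sum_comm]
  exact Finset.sum_congr rfl fun j _ => Finset.sum_congr rfl fun k _ => by ring

end IntegrationByParts

/-! ### Second moments of traces of nontrivial words -/

section SecondMoment

variable {ι : Type*} [Fintype ι]

/-- The second moment of the trace of `g` is bounded uniformly in the matrix size. -/
def BoundedSecondMoment (g : FreeGroup ι) : Prop :=
  ∃ C : ℝ, 0 ≤ C ∧ ∀ (N : ℕ) (μ : Measure (Matrix.unitaryGroup (Fin N) ℂ)) [μ.IsHaarMeasure]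
    [IsProbabilityMeasure μ], ∫ U, ‖wordTrace U g‖ ^ 2 ∂(Measure.pi fun _ : ι => μ) ≤ C

lemma BoundedSecondMoment.mul_comm {g h : FreeGroup ι} (H : BoundedSecondMoment (g * h)) :
    BoundedSecondMoment (h * g) := by
  simpa only [BoundedSecondMoment, wordTrace_mul_comm _ h g] using H

lemma BoundedSecondMoment.of_inv {g : FreeGroup ι} (H : BoundedSecondMoment g⁻¹) :
    BoundedSecondMoment g := by
  simpa only [BoundedSecondMoment, wordTrace_inv, RCLike.norm_conj] using H

/-- Continuous functions of finitely many unitaries are integrable. -/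
lemma Continuous.integrable_pi_unitary {N : ℕ} {E : Type*} [NormedAddCommGroup E]
    (μ : Measure (Matrix.unitaryGroup (Fin N) ℂ)) [IsProbabilityMeasure μ]
    {f : (ι → Matrix.unitaryGroup (Fin N) ℂ) → E} (hf : Continuous f) :
    Integrable f (Measure.pi fun _ : ι => μ) :=
  hf.integrable_of_hasCompactSupport (HasCompactSupport.of_compactSpace _)

lemma norm_list_sum_map_le {α : Type*} (l : List α) {F : α → ℂ} {G : α → ℝ}
    (h : ∀ c ∈ l, ‖F c‖ ≤ G c) : ‖(l.map F).sum‖ ≤ (l.map G).sum := by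
  induction l with
  | nil => simp
  | cons c l ih =>
    simp only [List.map_cons, List.sum_cons]
    exact (norm_add_le _ _).trans (add_le_add (h c (by simp))
      (ih fun d hd => h d (List.mem_cons_of_mem _ hd)))

lemma exists_bound_integral_sq_sum_norm_wordTrace {α : Type*} (l : List α) (g : α → FreeGroup ι)
    (hg : ∀ c ∈ l, BoundedSecondMoment (g c)) :
    ∃ C : ℝ, 0 ≤ C ∧ ∀ (N : ℕ) (μ : Measure (Matrix.unitaryGroup (Fin N) ℂ)) [μ.IsHaarMeasure]
      [IsProbabilityMeasure μ],
      ∫ U, (l.map fun c => ‖wordTrace U (g c)‖).sum ^ 2 ∂(Measure.pi fun _ : ι => μ) ≤ C := by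
  induction l with
  | nil => exact ⟨0, le_rfl, fun N μ _ _ => by simp⟩
  | cons c l ih =>
    obtain ⟨C, hC0, hC⟩ := ih fun d hd => hg d (List.mem_cons_of_mem _ hd)
    obtain ⟨B, hB0, hB⟩ := hg c (by simp)
    refine ⟨2 * B + 2 * C, by positivity, fun N μ _ _ => ?_⟩
    have hcont : ∀ l : List α, Continuous fun U : ι → Matrix.unitaryGroup (Fin N) ℂ =>
        (l.map fun c => ‖wordTrace U (g c)‖).sum := fun l =>
      continuous_list_sum _ fun _ _ => (continuous_wordTrace _).norm
    have h1 := (((continuous_wordTrace (N := N) (g c)).norm.pow 2).const_mul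
      2).integrable_pi_unitary μ
    have h2 := (((hcont l).pow 2).const_mul 2).integrable_pi_unitary μ
    calc _ ≤ ∫ U, (2 * ‖wordTrace U (g c)‖ ^ 2 +
          2 * (l.map fun c => ‖wordTrace U (g c)‖).sum ^ 2) ∂(Measure.pi fun _ : ι => μ) := by
          refine integral_mono (((hcont (c :: l)).pow 2).integrable_pi_unitary μ) (h1.add h2)
            fun U => ?_
          simp only [List.map_cons, List.sum_cons]
          nlinarith [sq_nonneg (‖wordTrace U (g c)‖ -
            (l.map fun c => ‖wordTrace U (g c)‖).sum)]
      _ ≤ 2 * B + 2 * C := by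
          refine (integral_add h1 h2).le.trans ?_
          rw [integral_const_mul, integral_const_mul]
          exact add_le_add (mul_le_mul_of_nonneg_left (hB N μ) (by norm_num))
            (mul_le_mul_of_nonneg_left (hC N μ) (by norm_num))

variable [DecidableEq ι]

omit [Fintype ι] in
lemma splitSum_cons_true {N : ℕ} (e : ι) (w : List (ι × Bool))
    (U : ι → Matrix.unitaryGroup (Fin N) ℂ) :
    splitSum e ((e, true) :: w) U = N * wordTrace U (FreeGroup.mk ((e, true) :: w)) +
      ((cuts e w).map fun c => c.1 * (wordTrace U (FreeGroup.mk ((e, true) :: c.2.1)) *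
        wordTrace U (FreeGroup.mk c.2.2))).sum := by
  simp [splitSum, cuts, ← FreeGroup.one_eq_mk, wordTrace_one, Function.comp_def]

omit [Fintype ι] in
lemma norm_mergeSum_le {N : ℕ} (e : ι) (w v : List (ι × Bool))
    (U : ι → Matrix.unitaryGroup (Fin N) ℂ) :
    ‖mergeSum e w v U‖ ≤ (cuts e v).length * N := by
  refine (norm_list_sum_map_le _ (G := fun _ => (N : ℝ)) fun c hc => ?_).trans (by simp)
  rw [norm_mul, norm_sign_of_mem_cuts hc, one_mul]
  exact norm_wordTrace_le _ _

lemma BoundedSecondMoment.of_cuts (e : ι) (w : List (ι × Bool))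
    (h : ∀ c ∈ cuts e w, BoundedSecondMoment (FreeGroup.mk c.2.2)) :
    BoundedSecondMoment (FreeGroup.mk ((e, true) :: w)) := by
  obtain ⟨C, hC0, hC⟩ := exists_bound_integral_sq_sum_norm_wordTrace (cuts e w)
    (fun c => FreeGroup.mk c.2.2) h
  set v := (e, true) :: w with hv
  set k : ℝ := Nat.cast (cuts e (FreeGroup.invRev v)).length
  refine ⟨C + 2 * k, by positivity, fun N μ _ _ => ?_⟩
  rcases N.eq_zero_or_pos with rfl | hN
  · have h0 : ∀ U : ι → Matrix.unitaryGroup (Fin 0) ℂ, wordTrace U (FreeGroup.mk v) = 0 :=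
      fun U => by simp [wordTrace]
    simp only [h0, norm_zero]
    simpa using by positivity
  set R : (ι → Matrix.unitaryGroup (Fin N) ℂ) → ℂ := fun U =>
    ((cuts e w).map fun c => c.1 * (wordTrace U (FreeGroup.mk ((e, true) :: c.2.1)) *
        wordTrace U (FreeGroup.mk c.2.2))).sum with hR
  set S : (ι → Matrix.unitaryGroup (Fin N) ℂ) → ℝ := fun U =>
    ((cuts e w).map fun c => ‖wordTrace U (FreeGroup.mk c.2.2)‖).sum with hS
  set T : (ι → Matrix.unitaryGroup (Fin N) ℂ) → ℂ := fun U => wordTrace U (FreeGroup.mk v)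
  have hTc : Continuous T := continuous_wordTrace _
  have hSc : Continuous S := continuous_list_sum _ fun _ _ => (continuous_wordTrace _).norm
  have hRc : Continuous R := continuous_list_sum _ fun _ _ =>
    continuous_const.mul ((continuous_wordTrace _).mul (continuous_wordTrace _))
  have hRS : ∀ U, ‖R U‖ ≤ N * S U := fun U => by
    rw [hS, ← List.sum_map_mul_left]
    refine norm_list_sum_map_le _ fun c hc => ?_
    rw [norm_mul, norm_sign_of_mem_cuts hc, one_mul, norm_mul]
    exact mul_le_mul_of_nonneg_right (norm_wordTrace_le _ _) (norm_nonneg _)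
  have hSD := integral_wordTrace_mul_splitSum_add μ e v (FreeGroup.invRev v)
  have hterm : ∀ U : ι → Matrix.unitaryGroup (Fin N) ℂ,
      wordTrace U (FreeGroup.mk (FreeGroup.invRev v)) * splitSum e v U +
        mergeSum e v (FreeGroup.invRev v) U = ((N * ‖T U‖ ^ 2 : ℝ) : ℂ) +
        (starRingEnd ℂ (T U) * R U + mergeSum e v (FreeGroup.invRev v) U) := fun U => by
    rw [← FreeGroup.inv_mk, wordTrace_inv, hv, splitSum_cons_true]
    push_cast
    rw [← Complex.conj_mul']
    ring
  have hI1 : Integrable (fun U => ((N * ‖T U‖ ^ 2 : ℝ) : ℂ)) (Measure.pi fun _ : ι => μ) :=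
    Continuous.integrable_pi_unitary μ (by fun_prop)
  have hI2 : Integrable (fun U => starRingEnd ℂ (T U) * R U +
      mergeSum e v (FreeGroup.invRev v) U) (Measure.pi fun _ : ι => μ) :=
    Continuous.integrable_pi_unitary μ
      (((Complex.continuous_conj.comp hTc).mul hRc).add (continuous_mergeSum _ _ _))
  simp only [hterm] at hSD
  rw [integral_add hI1 hI2, integral_complex_ofReal, integral_const_mul] at hSD
  have hbound : ∀ U, ‖starRingEnd ℂ (T U) * R U + mergeSum e v (FreeGroup.invRev v) U‖ ≤
      N * (1 / 2 * ‖T U‖ ^ 2 + (1 / 2 * S U ^ 2 + k)) := fun U => by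
    refine (norm_add_le _ _).trans ?_
    rw [norm_mul, RCLike.norm_conj]
    have h1 := mul_le_mul_of_nonneg_left (hRS U) (norm_nonneg (T U))
    have h2 := norm_mergeSum_le e v (FreeGroup.invRev v) U
    have h3 : (0 : ℝ) ≤ N * (‖T U‖ - S U) ^ 2 := by positivity
    linarith
  have hJ1 : Integrable (fun U => 1 / 2 * ‖T U‖ ^ 2) (Measure.pi fun _ : ι => μ) :=
    Continuous.integrable_pi_unitary μ (by fun_prop)
  have hJ2 : Integrable (fun U => 1 / 2 * S U ^ 2) (Measure.pi fun _ : ι => μ) :=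
    Continuous.integrable_pi_unitary μ (by fun_prop)
  have hfinal := norm_integral_le_of_norm_le
    ((hJ1.add (hJ2.add (integrable_const k))).const_mul (N : ℝ))
    (Filter.Eventually.of_forall hbound)
  rw [eq_neg_of_add_eq_zero_right hSD, norm_neg, Complex.norm_real, integral_const_mul,
    integral_add' hJ1 (hJ2.add (integrable_const k)), integral_add' hJ2 (integrable_const k),
    integral_const_mul, integral_const_mul] at hfinal
  have hfinal' := (le_abs_self _).trans hfinal
  have hN' : (0 : ℝ) < N := by exact_mod_cast hN
  have hdiv := le_of_mul_le_mul_left hfinal' hN'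
  have hCN := hC N μ
  simp only [integral_const, probReal_univ, one_smul] at hdiv
  change ∫ U, ‖T U‖ ^ 2 ∂(Measure.pi fun _ : ι => μ) ≤ _
  change ∫ U, S U ^ 2 ∂(Measure.pi fun _ : ι => μ) ≤ _ at hCN
  linarith

/-- The trace of a nontrivial word has second moment bounded uniformly in the matrix size. -/
theorem boundedSecondMoment_mk (w : List (ι × Bool)) (hw : FreeGroup.mk w ≠ 1) :
    BoundedSecondMoment (FreeGroup.mk w) := by
  induction hn : w.length using Nat.strong_induction_on generalizing w with
  | _ n ih =>
    have hpos : ∀ (e : ι) (u : List (ι × Bool)), u.length < n →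
        FreeGroup.mk ((e, true) :: u) ≠ 1 →
        BoundedSecondMoment (FreeGroup.mk ((e, true) :: u)) := by
      intro e u hu hne
      by_cases hc : ∃ c ∈ cuts e u, FreeGroup.mk c.2.2 = 1
      · obtain ⟨c, hc, h1⟩ := hc
        have happ := append_eq_of_mem_cuts hc
        by_cases hnil : c.2.2 = []
        · obtain ⟨u', hu'⟩ := List.getLast?_eq_some_iff.1
            (getLast?_of_mem_cuts_of_right_eq_nil hc hnil)
          have hconj : FreeGroup.mk ((e, true) :: u) =
              FreeGroup.of e * (FreeGroup.mk u' * (FreeGroup.of e)⁻¹) := by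
            simp [hu', FreeGroup.of, FreeGroup.invRev]
          rw [hconj] at hne ⊢
          refine BoundedSecondMoment.mul_comm ?_
          rw [inv_mul_cancel_right]
          refine ih u'.length ?_ u' ?_ rfl
          · rw [hu', List.length_append] at hu
            simp at hu
            omega
          · intro h
            simp [h] at hne
        · have hmk : FreeGroup.mk ((e, true) :: u) = FreeGroup.mk ((e, true) :: c.2.1) := by
            rw [← happ, ← List.cons_append, ← FreeGroup.mul_mk, h1, mul_one]
          rw [hmk] at hne ⊢
          refine ih _ ?_ _ hne rfl
          have := List.length_pos_iff.2 hnil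
          rw [← happ, List.length_append] at hu
          rw [List.length_cons]
          omega
      · push Not at hc
        refine BoundedSecondMoment.of_cuts e u fun c hcu => ih c.2.2.length ?_ _ (hc c hcu) rfl
        have := congrArg List.length (append_eq_of_mem_cuts hcu)
        rw [List.length_append] at this
        omega
    match w, hw, hn with
    | [], hw, _ => exact absurd FreeGroup.one_eq_mk.symm hw
    | (e, true) :: u, hw, hn => exact hpos e u (by simp at hn; omega) hw
    | (e, false) :: u, hw, hn =>
      have hconj : (FreeGroup.mk ((e, false) :: u))⁻¹ =
          FreeGroup.mk (FreeGroup.invRev u) * FreeGroup.mk [(e, true)] := by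
        simp [FreeGroup.inv_mk, FreeGroup.invRev]
      refine BoundedSecondMoment.of_inv ?_
      rw [hconj]
      refine BoundedSecondMoment.mul_comm ?_
      rw [FreeGroup.mul_mk, List.singleton_append]
      refine hpos e _ ?_ fun h => hw ?_
      · rw [FreeGroup.invRev_length]
        simp at hn
        omega
      · rw [← List.singleton_append, ← FreeGroup.mul_mk, mul_eq_one_iff_eq_inv] at h
        rw [← inv_eq_one, hconj, h, mul_inv_cancel]
end SecondMoment

/-! ### Convergence to a Gaussian from an approximate Stein equation -/

section Stein

lemma hasDerivAt_charFun {ν : Measure ℝ} [IsProbabilityMeasure ν] (hν : Integrable id ν) (s : ℝ) :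
    HasDerivAt (charFun ν) (Complex.I * ∫ x, x * Complex.exp (s * x * Complex.I) ∂ν) s := by
  have h1 : MemLp id (1 : ℕ) ν := by simpa using memLp_one_iff_integrable.2 hν
  have h2 := ((contDiff_charFun h1).differentiable (by simp) s).hasDerivAt
  rw [← iteratedDeriv_one, iteratedDeriv_charFun h1] at h2
  simpa using h2

/-- A probability measure which nearly satisfies the Stein equation of a centered Gaussian, tested
on characters, has nearly the same characteristic function. -/
lemma norm_charFun_mul_exp_sub_one_le {ν : Measure ℝ} [IsProbabilityMeasure ν]
    (hν : Integrable id ν) {σ2 ε : ℝ} (hσ2 : 0 ≤ σ2)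
    (h : ∀ s : ℝ, ‖∫ x, x * Complex.exp (s * x * Complex.I) ∂ν -
      Complex.I * s * σ2 * charFun ν s‖ ≤ ε * (1 + |s|)) (s : ℝ) :
    ‖charFun ν s * Complex.exp (σ2 * s ^ 2 / 2) - 1‖ ≤
      ε * ((1 + |s|) * Real.exp (σ2 * s ^ 2 / 2) * |s|) := by
  have hε : 0 ≤ ε := by simpa using (norm_nonneg _).trans (h 0)
  have hderiv : ∀ t : ℝ, HasDerivAt (fun t : ℝ => charFun ν t * Complex.exp (σ2 * t ^ 2 / 2))
      (Complex.I * (∫ x, x * Complex.exp (t * x * Complex.I) ∂ν -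
        Complex.I * t * σ2 * charFun ν t) * Complex.exp (σ2 * t ^ 2 / 2)) t := fun t => by
    have h1 : HasDerivAt (fun t : ℝ => Complex.exp (σ2 * t ^ 2 / 2))
        (Complex.exp (σ2 * t ^ 2 / 2) * (σ2 * t)) t := by
      have h0 : HasDerivAt (𝕜 := ℂ) (fun z : ℂ => (σ2 : ℂ) * z ^ 2 / 2) ((σ2 : ℂ) * t) t := by
        refine (((hasDerivAt_pow 2 (t : ℂ)).const_mul (σ2 : ℂ)).div_const 2).congr_deriv ?_
        simp
        ring
      exact h0.cexp.comp_ofReal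
    refine ((hasDerivAt_charFun hν t).mul h1).congr_deriv ?_
    linear_combination ((t : ℂ) * σ2 * charFun ν t * Complex.exp (σ2 * t ^ 2 / 2)) *
      Complex.I_mul_I
  have hbound : ∀ t ∈ Set.Icc (-|s|) |s|, ‖Complex.I * (∫ x, x * Complex.exp (t * x * Complex.I) ∂ν
      - Complex.I * t * σ2 * charFun ν t) * Complex.exp (σ2 * t ^ 2 / 2)‖ ≤
      ε * ((1 + |s|) * Real.exp (σ2 * s ^ 2 / 2)) := fun t ht => by
    have hts : |t| ≤ |s| := abs_le.2 ht
    rw [norm_mul, norm_mul, Complex.norm_I, one_mul, ← mul_assoc, Complex.norm_exp]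
    refine mul_le_mul ((h t).trans (by gcongr)) ?_ (Real.exp_nonneg _) (by positivity)
    have hre : ((σ2 : ℂ) * t ^ 2 / 2).re = σ2 * t ^ 2 / 2 := by
      rw [← Complex.ofReal_re (σ2 * t ^ 2 / 2)]
      push_cast
      rfl
    rw [hre, Real.exp_le_exp]
    have := sq_le_sq.2 hts
    gcongr
  have := Convex.norm_image_sub_le_of_norm_hasDerivWithin_le
    (fun t _ => (hderiv t).hasDerivWithinAt) hbound (convex_Icc (-|s|) |s|)
    (⟨by simp, by simp⟩ : (0 : ℝ) ∈ Set.Icc (-|s|) |s|) (abs_le.1 le_rfl : s ∈ Set.Icc (-|s|) |s|)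
  simpa [mul_assoc] using this

theorem tendsto_of_stein {ν : ℕ → ProbabilityMeasure ℝ} {γ : ProbabilityMeasure ℝ}
    {σ2 : ℝ≥0} {ε : ℕ → ℝ} (hγ : (γ : Measure ℝ) = gaussianReal 0 σ2)
    (hν : ∀ n, Integrable id (ν n : Measure ℝ)) (hε : Tendsto ε atTop (nhds 0))
    (h : ∀ᶠ n in atTop, ∀ s : ℝ, ‖∫ x, x * Complex.exp (s * x * Complex.I) ∂(ν n : Measure ℝ) -
      Complex.I * s * (σ2 : ℝ) * charFun (ν n : Measure ℝ) s‖ ≤ ε n * (1 + |s|)) :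
    Tendsto ν atTop (nhds γ) := by
  rw [ProbabilityMeasure.tendsto_iff_tendsto_charFun]
  intro s
  have hlim : Tendsto (fun n => charFun (ν n : Measure ℝ) s *
      Complex.exp ((σ2 : ℝ) * s ^ 2 / 2)) atTop (nhds 1) := by
    rw [tendsto_iff_norm_sub_tendsto_zero]
    refine squeeze_zero' (Eventually.of_forall fun _ => norm_nonneg _) ?_
      (by simpa using hε.mul_const ((1 + |s|) * Real.exp (σ2 * s ^ 2 / 2) * |s|))
    filter_upwards [h] with n hn
    exact norm_charFun_mul_exp_sub_one_le (hν n) σ2.2 hn s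
  have := hlim.mul_const (Complex.exp (-((σ2 : ℝ) * s ^ 2 / 2)))
  simp only [mul_assoc, ← Complex.exp_add, add_neg_cancel, Complex.exp_zero, mul_one,
    one_mul] at this
  simpa [hγ, charFun_gaussianReal, sub_eq_add_neg] using this

end Stein

/-! ### First moments of the error terms -/

section FirstMoment

variable {ι : Type*} [Fintype ι]

/-- A family of continuous observables, one for each matrix size, whose first absolute moments are
bounded uniformly in the matrix size. -/
structure BoundedFirstMoment (F : ∀ N : ℕ, (ι → Matrix.unitaryGroup (Fin N) ℂ) → ℂ) : Prop where
  continuous : ∀ N, Continuous (F N)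
  exists_bound : ∃ C : ℝ, ∀ (N : ℕ) (μ : Measure (Matrix.unitaryGroup (Fin N) ℂ))
    [μ.IsHaarMeasure] [IsProbabilityMeasure μ], ∫ U, ‖F N U‖ ∂(Measure.pi fun _ : ι => μ) ≤ C

namespace BoundedFirstMoment

variable {F G : ∀ N : ℕ, (ι → Matrix.unitaryGroup (Fin N) ℂ) → ℂ}

lemma zero : BoundedFirstMoment (ι := ι) fun _ _ => 0 :=
  ⟨fun _ => continuous_const, 0, fun N μ _ _ => by simp⟩

lemma add (hF : BoundedFirstMoment F) (hG : BoundedFirstMoment G) :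
    BoundedFirstMoment fun N U => F N U + G N U := by
  obtain ⟨A, hA⟩ := hF.exists_bound
  obtain ⟨B, hB⟩ := hG.exists_bound
  refine ⟨fun N => (hF.continuous N).add (hG.continuous N), A + B, fun N μ _ _ => ?_⟩
  have h1 := (hF.continuous N).norm.integrable_pi_unitary μ
  have h2 := (hG.continuous N).norm.integrable_pi_unitary μ
  refine (integral_mono (((hF.continuous N).add (hG.continuous N)).norm.integrable_pi_unitary μ)
    (h1.add h2) fun U => norm_add_le _ _).trans ?_
  exact (integral_add h1 h2).le.trans (add_le_add (hA N μ) (hB N μ))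

lemma const_mul (hF : BoundedFirstMoment F) (z : ℂ) : BoundedFirstMoment fun N U => z * F N U := by
  obtain ⟨A, hA⟩ := hF.exists_bound
  refine ⟨fun N => continuous_const.mul (hF.continuous N), ‖z‖ * A, fun N μ _ _ => ?_⟩
  simp only [norm_mul, integral_const_mul]
  exact mul_le_mul_of_nonneg_left (hA N μ) (norm_nonneg z)

lemma list_sum {α : Type*} (l : List α) {H : α → ∀ N : ℕ, (ι → Matrix.unitaryGroup (Fin N) ℂ) → ℂ}
    (h : ∀ c ∈ l, BoundedFirstMoment (H c)) :
    BoundedFirstMoment fun N U => (l.map fun c => H c N U).sum := by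
  induction l with
  | nil => simpa using zero
  | cons c l ih =>
    simpa using (h c (by simp)).add (ih fun d hd => h d (List.mem_cons_of_mem _ hd))

lemma finset_sum {α : Type*} (s : Finset α)
    {H : α → ∀ N : ℕ, (ι → Matrix.unitaryGroup (Fin N) ℂ) → ℂ}
    (h : ∀ c ∈ s, BoundedFirstMoment (H c)) :
    BoundedFirstMoment fun N U => ∑ c ∈ s, H c N U := by
  simpa using list_sum s.toList fun c hc => h c (by simpa using hc)

lemma norm_integral_mul_le (hF : BoundedFirstMoment F) : ∃ C : ℝ, 0 ≤ C ∧ ∀ (N : ℕ)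
    (μ : Measure (Matrix.unitaryGroup (Fin N) ℂ)) [μ.IsHaarMeasure] [IsProbabilityMeasure μ]
    (f : (ι → Matrix.unitaryGroup (Fin N) ℂ) → ℂ), (∀ U, ‖f U‖ ≤ 1) →
    ‖∫ U, f U * F N U ∂(Measure.pi fun _ : ι => μ)‖ ≤ C := by
  obtain ⟨A, hA⟩ := hF.exists_bound
  refine ⟨|A|, abs_nonneg _, fun N μ _ _ f hf => ?_⟩
  refine (norm_integral_le_of_norm_le ((hF.continuous N).norm.integrable_pi_unitary μ)
    (Eventually.of_forall fun U => ?_)).trans ((hA N μ).trans (le_abs_self A))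
  rw [norm_mul]
  exact mul_le_of_le_one_left (norm_nonneg _) (hf U)

end BoundedFirstMoment

lemma BoundedSecondMoment.mul {g h : FreeGroup ι} (hg : BoundedSecondMoment g)
    (hh : BoundedSecondMoment h) :
    BoundedFirstMoment fun _ U => wordTrace U g * wordTrace U h := by
  obtain ⟨A, -, hA⟩ := hg
  obtain ⟨B, -, hB⟩ := hh
  refine ⟨fun N => (continuous_wordTrace g).mul (continuous_wordTrace h), 1 / 2 * A + 1 / 2 * B,
    fun N μ _ _ => ?_⟩
  have h1 : Integrable (fun U => 1 / 2 * ‖wordTrace U g‖ ^ 2) (Measure.pi fun _ : ι => μ) :=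
    Continuous.integrable_pi_unitary μ (continuous_const.mul ((continuous_wordTrace g).norm.pow 2))
  have h2 : Integrable (fun U => 1 / 2 * ‖wordTrace U h‖ ^ 2) (Measure.pi fun _ : ι => μ) :=
    Continuous.integrable_pi_unitary μ (continuous_const.mul ((continuous_wordTrace h).norm.pow 2))
  refine (integral_mono (((continuous_wordTrace g).mul
    (continuous_wordTrace h)).norm.integrable_pi_unitary μ) (h1.add h2) fun U => ?_).trans ?_
  · simp only [Pi.mul_apply, norm_mul, Pi.add_apply]
    nlinarith [sq_nonneg (‖wordTrace U g‖ - ‖wordTrace U h‖)]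
  · refine (integral_add h1 h2).le.trans ?_
    rw [integral_const_mul, integral_const_mul]
    linarith [hA N μ, hB N μ]

lemma BoundedSecondMoment.boundedFirstMoment {g : FreeGroup ι} (hg : BoundedSecondMoment g) :
    BoundedFirstMoment fun _ U => wordTrace U g := by
  obtain ⟨A, -, hA⟩ := hg
  refine ⟨fun N => continuous_wordTrace g, 1 / 2 * A + 1 / 2, fun N μ _ _ => ?_⟩
  have h1 : Integrable (fun U => 1 / 2 * ‖wordTrace U g‖ ^ 2) (Measure.pi fun _ : ι => μ) :=
    Continuous.integrable_pi_unitary μ (continuous_const.mul ((continuous_wordTrace g).norm.pow 2))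
  refine (integral_mono ((continuous_wordTrace g).norm.integrable_pi_unitary μ)
    (h1.add (integrable_const (1 / 2))) fun U => ?_).trans ?_
  · simp only [Pi.add_apply]
    nlinarith [sq_nonneg (‖wordTrace U g‖ - 1)]
  · refine (integral_add h1 (integrable_const (1 / 2))).le.trans ?_
    rw [integral_const_mul]
    simp only [integral_const, probReal_univ, one_smul]
    linarith [hA N μ]

variable [DecidableEq ι]

/-- The signed number of ways in which inserting `w` into `v` at the letter `e` gives the trivial
word. -/
def mergeCoeff (e : ι) (w v : List (ι × Bool)) : ℂ :=
  ((cuts e v).map fun c =>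
    if FreeGroup.mk w * (FreeGroup.mk c.2.2 * FreeGroup.mk c.2.1) = 1 then c.1 else 0).sum

lemma boundedFirstMoment_mergeSum_sub (e : ι) (w v : List (ι × Bool)) :
    BoundedFirstMoment fun N U => mergeSum e w v U - mergeCoeff e w v * N := by
  have h : ∀ (N : ℕ) (U : ι → Matrix.unitaryGroup (Fin N) ℂ),
      mergeSum e w v U - mergeCoeff e w v * N = ((cuts e v).map fun c => c.1 *
        (if FreeGroup.mk w * (FreeGroup.mk c.2.2 * FreeGroup.mk c.2.1) = 1 then 0 else
          wordTrace U (FreeGroup.mk w * (FreeGroup.mk c.2.2 * FreeGroup.mk c.2.1)))).sum := by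
    intro N U
    rw [sub_eq_iff_eq_add, mergeSum, mergeCoeff, ← List.sum_map_mul_right, ← List.sum_map_add]
    refine congrArg _ (List.map_congr_left fun c _ => ?_)
    split_ifs with hc
    · rw [hc, wordTrace_one, mul_zero, zero_add]
    · simp
  simp only [h]
  refine BoundedFirstMoment.list_sum _ fun c _ => BoundedFirstMoment.const_mul ?_ _
  split_ifs with hc
  · exact BoundedFirstMoment.zero
  · rw [FreeGroup.mul_mk, FreeGroup.mul_mk] at hc ⊢
    exact (boundedSecondMoment_mk _ hc).boundedFirstMoment

lemma boundedFirstMoment_splitSum_sub (e : ι) (w : List (ι × Bool))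
    (h : ∀ c ∈ cuts e w, FreeGroup.mk ((e, true) :: c.2.1) ≠ 1 ∧ FreeGroup.mk c.2.2 ≠ 1) :
    BoundedFirstMoment fun N U => splitSum e ((e, true) :: w) U -
      N * wordTrace U (FreeGroup.mk ((e, true) :: w)) := by
  simp only [splitSum_cons_true, add_sub_cancel_left]
  exact BoundedFirstMoment.list_sum _ fun c hc => BoundedFirstMoment.const_mul
    ((boundedSecondMoment_mk _ (h c hc).1).mul (boundedSecondMoment_mk _ (h c hc).2)) _

end FirstMoment

/-! ### The approximate Stein equation for sums of traces -/

section SumOfTraces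

variable {ι κ : Type*} [Fintype ι] [DecidableEq ι]

lemma exists_bound_integral_cexp_mul_wordTrace_sub (S : Finset κ) (v : κ → List (ι × Bool)) (e : ι)
    (w : List (ι × Bool))
    (hsplit : ∀ c ∈ cuts e w, FreeGroup.mk ((e, true) :: c.2.1) ≠ 1 ∧ FreeGroup.mk c.2.2 ≠ 1)
    (hmerge : ∑ k ∈ S, mergeCoeff e ((e, true) :: w) (v k) = -1) :
    ∃ A B : ℝ, 0 ≤ A ∧ 0 ≤ B ∧ ∀ (N : ℕ) (μ : Measure (Matrix.unitaryGroup (Fin N) ℂ))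
      [μ.IsHaarMeasure] [IsProbabilityMeasure μ] (z : ℂ), 0 < N →
      (∀ U : ι → Matrix.unitaryGroup (Fin N) ℂ,
        ‖Complex.exp (z * ∑ k ∈ S, wordTrace U (FreeGroup.mk (v k)))‖ ≤ 1) →
      ‖∫ U, Complex.exp (z * ∑ k ∈ S, wordTrace U (FreeGroup.mk (v k))) *
          wordTrace U (FreeGroup.mk ((e, true) :: w)) ∂(Measure.pi fun _ : ι => μ) -
        z * ∫ U, Complex.exp (z * ∑ k ∈ S, wordTrace U (FreeGroup.mk (v k)))
          ∂(Measure.pi fun _ : ι => μ)‖ ≤ (A + ‖z‖ * B) / N := by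
  have hR := boundedFirstMoment_splitSum_sub e w hsplit
  have hE := BoundedFirstMoment.finset_sum S fun k _ =>
    boundedFirstMoment_mergeSum_sub e ((e, true) :: w) (v k)
  obtain ⟨A, hA0, hA⟩ := hR.norm_integral_mul_le
  obtain ⟨B, hB0, hB⟩ := hE.norm_integral_mul_le
  refine ⟨A, B, hA0, hB0, fun N μ _ _ z hN hf => ?_⟩
  have hSD := integral_cexp_mul_splitSum_add μ S z v e ((e, true) :: w)
  set u := (e, true) :: w
  set f : (ι → Matrix.unitaryGroup (Fin N) ℂ) → ℂ := fun U =>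
    Complex.exp (z * ∑ k ∈ S, wordTrace U (FreeGroup.mk (v k))) with hfdef
  have hfc : Continuous f := Complex.continuous_exp.comp
    (continuous_const.mul (continuous_finsetSum _ fun k _ => continuous_wordTrace _))
  have hterm : ∀ U, f U * (splitSum e u U + z * ∑ k ∈ S, mergeSum e u (v k) U) =
      (N * (f U * wordTrace U (FreeGroup.mk u)) - N * z * f U) +
        (f U * (splitSum e u U - N * wordTrace U (FreeGroup.mk u)) +
          z * (f U * ∑ k ∈ S, (mergeSum e u (v k) U - mergeCoeff e u (v k) * N))) := fun U => by
    rw [Finset.sum_sub_distrib, ← Finset.sum_mul, hmerge]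
    ring
  have hI1 : Integrable (fun U => (N : ℂ) * (f U * wordTrace U (FreeGroup.mk u)))
      (Measure.pi fun _ : ι => μ) :=
    Continuous.integrable_pi_unitary μ (continuous_const.mul (hfc.mul (continuous_wordTrace _)))
  have hI2 : Integrable (fun U => N * z * f U) (Measure.pi fun _ : ι => μ) :=
    Continuous.integrable_pi_unitary μ (continuous_const.mul hfc)
  have hI3 : Integrable (fun U => f U * (splitSum e u U - N * wordTrace U (FreeGroup.mk u)))
      (Measure.pi fun _ : ι => μ) :=
    Continuous.integrable_pi_unitary μ (hfc.mul (hR.continuous N))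
  have hI4 : Integrable (fun U => z * (f U * ∑ k ∈ S, (mergeSum e u (v k) U -
      mergeCoeff e u (v k) * N))) (Measure.pi fun _ : ι => μ) :=
    Continuous.integrable_pi_unitary μ (continuous_const.mul (hfc.mul (hE.continuous N)))
  change ∫ U, f U * (splitSum e u U + z * ∑ k ∈ S, mergeSum e u (v k) U)
    ∂(Measure.pi fun _ : ι => μ) = 0 at hSD
  simp only [hterm] at hSD
  have hsplitInt := (integral_add (hI1.sub hI2) (hI3.add hI4)).symm.trans hSD
  rw [integral_sub' hI1 hI2, integral_add' hI3 hI4, integral_const_mul, integral_const_mul,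
    integral_const_mul, mul_assoc, ← mul_sub] at hsplitInt
  have hN' : (0 : ℝ) < N := by exact_mod_cast hN
  rw [le_div_iff₀ hN', mul_comm, ← Complex.norm_natCast (n := N), ← norm_mul,
    eq_neg_of_add_eq_zero_left hsplitInt, norm_neg]
  refine (norm_add_le _ _).trans (add_le_add (hA N μ f hf) ?_)
  rw [norm_mul]
  exact mul_le_mul_of_nonneg_left (hB N μ f hf) (norm_nonneg z)

/-- Suppose that splitting each of the words at its first letter never gives a trivial word, and
that merging it with all the words gives the trivial word exactly `-1` times, counted with sign.
Then a real multiple of the sum of the traces nearly satisfies the Stein equation. -/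
theorem exists_bound_stein (S : Finset κ) (e : κ → ι) (w : κ → List (ι × Bool))
    (hsplit : ∀ j ∈ S, ∀ c ∈ cuts (e j) (w j),
      FreeGroup.mk ((e j, true) :: c.2.1) ≠ 1 ∧ FreeGroup.mk c.2.2 ≠ 1)
    (hmerge : ∀ j ∈ S, ∑ k ∈ S, mergeCoeff (e j) ((e j, true) :: w j) ((e k, true) :: w k) = -1)
    (a : ℝ) :
    ∃ C : ℝ, ∀ (N : ℕ) (μ : Measure (Matrix.unitaryGroup (Fin N) ℂ))
      [μ.IsHaarMeasure] [IsProbabilityMeasure μ] (T : (ι → Matrix.unitaryGroup (Fin N) ℂ) → ℝ)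
      (s : ℝ), 0 < N →
      (∀ U, (T U : ℂ) = a * ∑ k ∈ S, wordTrace U (FreeGroup.mk ((e k, true) :: w k))) →
      ‖∫ U, T U * Complex.exp (s * T U * Complex.I) ∂(Measure.pi fun _ : ι => μ) -
        Complex.I * s * (a ^ 2 * #S) *
          ∫ U, Complex.exp (s * T U * Complex.I) ∂(Measure.pi fun _ : ι => μ)‖ ≤
        C / N * (1 + |s|) := by
  choose! A B hA hB hAB using fun j hj => exists_bound_integral_cexp_mul_wordTrace_sub S
    (fun k => (e k, true) :: w k) (e j) (w j) (hsplit j hj) (hmerge j hj)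
  refine ⟨|a| * ∑ j ∈ S, (A j + |a| * B j), fun N μ _ _ T s hN hT => ?_⟩
  set z : ℂ := s * a * Complex.I with hz
  have hexp : ∀ U, Complex.exp (s * T U * Complex.I) =
      Complex.exp (z * ∑ k ∈ S, wordTrace U (FreeGroup.mk ((e k, true) :: w k))) := fun U => by
    rw [hT, hz]
    ring_nf
  have hnorm : ∀ U, ‖Complex.exp (s * T U * Complex.I)‖ ≤ 1 := fun U => by
    rw [← Complex.ofReal_mul, Complex.norm_exp_ofReal_mul_I]
  have hzn : ‖z‖ = |s| * |a| := by simp [hz]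
  set f : (ι → Matrix.unitaryGroup (Fin N) ℂ) → ℂ := fun U => Complex.exp (s * T U * Complex.I)
  have hfc : Continuous f := by
    simp only [f, hexp]
    exact Complex.continuous_exp.comp
      (continuous_const.mul (continuous_finsetSum _ fun k _ => continuous_wordTrace _))
  have hbound : ∀ j ∈ S, ‖∫ U, f U * wordTrace U (FreeGroup.mk ((e j, true) :: w j))
      ∂(Measure.pi fun _ : ι => μ) - z * ∫ U, f U ∂(Measure.pi fun _ : ι => μ)‖ ≤
      (A j + ‖z‖ * B j) / N := fun j hj => by
    simp only [f, hexp]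
    exact hAB j hj N μ z hN fun U => hexp U ▸ hnorm U
  have hint : ∫ U, T U * f U ∂(Measure.pi fun _ : ι => μ) =
      a * ∑ j ∈ S, ∫ U, f U * wordTrace U (FreeGroup.mk ((e j, true) :: w j))
        ∂(Measure.pi fun _ : ι => μ) := by
    have hI : ∀ j ∈ S, Integrable (fun U => f U * wordTrace U (FreeGroup.mk ((e j, true) :: w j)))
        (Measure.pi fun _ : ι => μ) := fun j _ =>
      Continuous.integrable_pi_unitary μ (hfc.mul (continuous_wordTrace _))
    rw [← integral_finsetSum S hI, ← integral_const_mul]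
    refine integral_congr_ae (Eventually.of_forall fun U => ?_)
    simp only [hT, ← Finset.mul_sum]
    ring
  have hdiff : a * ∑ j ∈ S, ∫ U, f U * wordTrace U (FreeGroup.mk ((e j, true) :: w j))
        ∂(Measure.pi fun _ : ι => μ) -
      Complex.I * s * (a ^ 2 * #S) * ∫ U, f U ∂(Measure.pi fun _ : ι => μ) =
      a * ∑ j ∈ S, (∫ U, f U * wordTrace U (FreeGroup.mk ((e j, true) :: w j))
        ∂(Measure.pi fun _ : ι => μ) - z * ∫ U, f U ∂(Measure.pi fun _ : ι => μ)) := by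
    rw [Finset.sum_sub_distrib, Finset.sum_const, nsmul_eq_mul, hz]
    ring
  rw [hint, hdiff, norm_mul, Complex.norm_real, Real.norm_eq_abs]
  have hfactor : (|a| * ∑ j ∈ S, (A j + |a| * B j)) / N * (1 + |s|) =
      |a| * ((∑ j ∈ S, (A j + |a| * B j)) * (1 + |s|) / N) := by ring
  rw [hfactor]
  refine mul_le_mul_of_nonneg_left ?_ (abs_nonneg a)
  refine (norm_sum_le _ _).trans ((Finset.sum_le_sum hbound).trans ?_)
  rw [← Finset.sum_div, Finset.sum_mul]
  refine div_le_div_of_nonneg_right (Finset.sum_le_sum fun j hj => ?_) (Nat.cast_nonneg N)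
  rw [hzn]
  have h1 : 0 ≤ |s| * A j := mul_nonneg (abs_nonneg s) (hA j hj)
  have h2 : 0 ≤ |a| * B j := mul_nonneg (abs_nonneg a) (hB j hj)
  linarith

end SumOfTraces

/-! ### Plaquettes -/

section Plaquettes

lemma eq_of_isReduced_of_mk_eq {ι : Type*} [DecidableEq ι] {u v : List (ι × Bool)}
    (hu : FreeGroup.IsReduced u) (hv : FreeGroup.IsReduced v)
    (h : FreeGroup.mk u = FreeGroup.mk v) : u = v := by
  rw [← hu.reduce_eq, ← hv.reduce_eq, ← FreeGroup.toWord_mk, h, FreeGroup.toWord_mk]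

lemma mk_ne_one_of_isReduced {ι : Type*} [DecidableEq ι] {u : List (ι × Bool)}
    (hu : FreeGroup.IsReduced u) (h0 : u ≠ []) : FreeGroup.mk u ≠ 1 := fun h =>
  h0 (eq_of_isReduced_of_mk_eq hu FreeGroup.IsReduced.nil (h.trans FreeGroup.one_eq_mk))

variable {D L : ℕ}

/-- The first edge of the plaquette word `plaquetteWord p`. -/
def plaquetteEdge (p : Site D L × Fin D × Fin D) : Edge D L := (shift p.1 p.2.1, p.2.2)

/-- The last three letters of the plaquette word `plaquetteWord p`. -/
def plaquetteTail (p : Site D L × Fin D × Fin D) : List (Edge D L × Bool) :=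
  [((p.1, p.2.1), true), ((p.1, p.2.2), false), ((shift p.1 p.2.2, p.2.1), false)]

/-- The word around the plaquette at the site `p.1` in the plane of the directions
`p.2.1` and `p.2.2`. -/
def plaquetteWord (p : Site D L × Fin D × Fin D) : List (Edge D L × Bool) :=
  (plaquetteEdge p, true) :: plaquetteTail p

/-- The same plaquette with the opposite orientation. -/
def plaquetteFlip (p : Site D L × Fin D × Fin D) : Site D L × Fin D × Fin D :=
  (p.1, p.2.2, p.2.1)

lemma invRev_plaquetteWord (p : Site D L × Fin D × Fin D) :
    FreeGroup.invRev (plaquetteWord p) = plaquetteWord (plaquetteFlip p) := by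
  simp [plaquetteWord, plaquetteEdge, plaquetteTail, plaquetteFlip, FreeGroup.invRev]

lemma plaquetteWord_injective : Function.Injective (plaquetteWord (D := D) (L := L)) := by
  rintro ⟨x, μ, ν⟩ ⟨y, μ', ν'⟩ h
  simp [plaquetteWord, plaquetteEdge, plaquetteTail] at h
  simp [h]

lemma isReduced_rotate_plaquetteWord {p : Site D L × Fin D × Fin D} (hp : p.2.1 ≠ p.2.2)
    {a b : List (Edge D L × Bool)} (h : a ++ b = plaquetteWord p) :
    FreeGroup.IsReduced (b ++ a) := by
  rw [plaquetteWord, plaquetteTail] at h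
  rcases a with _ | ⟨a₁, _ | ⟨a₂, _ | ⟨a₃, _ | ⟨a₄, a⟩⟩⟩⟩ <;>
    simp_all [FreeGroup.isReduced_cons_cons, plaquetteEdge, hp.symm]

lemma isReduced_plaquetteWord {p : Site D L × Fin D × Fin D} (hp : p.2.1 ≠ p.2.2) :
    FreeGroup.IsReduced (plaquetteWord p) := by
  have h := isReduced_rotate_plaquetteWord (a := []) hp rfl
  rwa [List.append_nil] at h

lemma mk_ne_one_of_mem_cuts_plaquetteTail {p : Site D L × Fin D × Fin D} (hp : p.2.1 ≠ p.2.2)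
    {c : ℂ × List (Edge D L × Bool) × List (Edge D L × Bool)}
    (hc : c ∈ cuts (plaquetteEdge p) (plaquetteTail p)) :
    FreeGroup.mk ((plaquetteEdge p, true) :: c.2.1) ≠ 1 ∧ FreeGroup.mk c.2.2 ≠ 1 := by
  have happ : ((plaquetteEdge p, true) :: c.2.1) ++ c.2.2 = plaquetteWord p := by
    rw [List.cons_append, append_eq_of_mem_cuts hc, plaquetteWord]
  have hred := isReduced_plaquetteWord hp
  rw [← happ] at hred
  refine ⟨mk_ne_one_of_isReduced (hred.infix (List.prefix_append _ _).isInfix) (by simp),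
    mk_ne_one_of_isReduced (hred.infix (List.suffix_append _ _).isInfix) fun h => ?_⟩
  have := getLast?_of_mem_cuts_of_right_eq_nil hc h
  simp [plaquetteTail, plaquetteEdge, hp] at this

lemma eq_flip_of_merge_eq_one {p q : Site D L × Fin D × Fin D} (hp : p.2.1 ≠ p.2.2)
    (hq : q.2.1 ≠ q.2.2) {a b : List (Edge D L × Bool)} (hab : a ++ b = plaquetteWord q)
    (h : FreeGroup.mk (plaquetteWord p) * (FreeGroup.mk b * FreeGroup.mk a) = 1) :
    q = plaquetteFlip p ∧ (a = [] ∨ b = []) := by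
  have hrot : b ++ a = plaquetteWord (plaquetteFlip p) := by
    refine eq_of_isReduced_of_mk_eq (isReduced_rotate_plaquetteWord hq hab)
      (isReduced_plaquetteWord hp.symm) ?_
    rw [← invRev_plaquetteWord, ← FreeGroup.inv_mk, ← FreeGroup.mul_mk]
    exact eq_inv_of_mul_eq_one_right h
  have hnil : a = [] ∨ b = [] := by
    rw [plaquetteWord, plaquetteTail] at hab hrot
    rcases a with _ | ⟨a₁, _ | ⟨a₂, _ | ⟨a₃, _ | ⟨a₄, a⟩⟩⟩⟩ <;> simp_all
  refine ⟨plaquetteWord_injective ?_, hnil⟩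
  rw [← hab, ← hrot]
  rcases hnil with rfl | rfl <;> simp

lemma mergeCoeff_plaquetteWord_of_ne {p q : Site D L × Fin D × Fin D} (hp : p.2.1 ≠ p.2.2)
    (hq : q.2.1 ≠ q.2.2) (hpq : q ≠ plaquetteFlip p) :
    mergeCoeff (plaquetteEdge p) (plaquetteWord p) (plaquetteWord q) = 0 := by
  refine List.sum_eq_zero fun z hz => ?_
  obtain ⟨c, hc, rfl⟩ := List.mem_map.1 hz
  exact if_neg fun h => hpq (eq_flip_of_merge_eq_one hp hq (append_eq_of_mem_cuts hc) h).1

lemma mergeCoeff_plaquetteWord_flip {p : Site D L × Fin D × Fin D} (hp : p.2.1 ≠ p.2.2) :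
    mergeCoeff (plaquetteEdge p) (plaquetteWord p) (plaquetteWord (plaquetteFlip p)) = -1 := by
  have hone : FreeGroup.mk (plaquetteWord p) * (FreeGroup.mk [] *
      FreeGroup.mk (plaquetteWord (plaquetteFlip p))) = 1 := by
    rw [← FreeGroup.one_eq_mk, one_mul, ← invRev_plaquetteWord, ← FreeGroup.inv_mk, mul_inv_cancel]
  have hcut : cuts (plaquetteEdge p) (plaquetteWord (plaquetteFlip p)) =
      (if p.1 = shift p.1 p.2.1 then
        [(1, [(plaquetteEdge (plaquetteFlip p), true)], plaquetteTail (plaquetteFlip p))] else []) ++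
      [(-1, plaquetteWord (plaquetteFlip p), [])] := by
    simp only [plaquetteWord, plaquetteEdge, plaquetteTail, plaquetteFlip, cuts, Prod.mk.injEq, hp,
      and_true, and_false, if_false, if_true]
    split_ifs <;> simp
  rw [mergeCoeff, hcut, List.map_append, List.sum_append]
  have hfirst : FreeGroup.mk (plaquetteWord p) *
      (FreeGroup.mk (plaquetteTail (plaquetteFlip p)) *
        FreeGroup.mk [(plaquetteEdge (plaquetteFlip p), true)]) ≠ 1 :=
    fun h => by simpa [plaquetteTail] using (eq_flip_of_merge_eq_one hp hp.symm rfl h).2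
  split_ifs
  · simp only [List.map_cons, List.map_nil, List.sum_cons, List.sum_nil, if_neg hfirst,
      if_pos hone, add_zero, zero_add]
  · simp only [List.map_cons, List.map_nil, List.sum_cons, List.sum_nil, if_pos hone, add_zero,
      zero_add]

end Plaquettes

/-! ### The Wilson action as a sum of traces -/

section WilsonAction

variable {D L : ℕ} [NeZero L]

/-- The oriented plaquettes of the lattice. -/
def orientedPlaquettes (D L : ℕ) [NeZero L] : Finset (Site D L × Fin D × Fin D) :=
  Finset.univ ×ˢ Finset.univ.offDiag

lemma mem_orientedPlaquettes {p : Site D L × Fin D × Fin D} :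
    p ∈ orientedPlaquettes D L ↔ p.2.1 ≠ p.2.2 := by
  simp [orientedPlaquettes]

lemma card_orientedPlaquettes : #(orientedPlaquettes D L) = L ^ D * (D * (D - 1)) := by
  simp [orientedPlaquettes, Finset.offDiag_card, ZMod.card, Nat.mul_sub]

lemma sum_mergeCoeff_plaquetteWord {p : Site D L × Fin D × Fin D}
    (hp : p ∈ orientedPlaquettes D L) : ∑ q ∈ orientedPlaquettes D L,
      mergeCoeff (plaquetteEdge p) (plaquetteWord p) (plaquetteWord q) = -1 := by
  rw [mem_orientedPlaquettes] at hp
  rw [Finset.sum_eq_single (plaquetteFlip p)]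
  · exact mergeCoeff_plaquetteWord_flip hp
  · exact fun q hq hqp => mergeCoeff_plaquetteWord_of_ne hp (mem_orientedPlaquettes.1 hq) hqp
  · exact fun h => absurd (mem_orientedPlaquettes.2 hp.symm) h

omit [NeZero L] in
lemma wordTrace_plaquetteWord {N : ℕ} (U : Conf D L N) (x : Site D L) (μ ν : Fin D) :
    wordTrace U (FreeGroup.mk (plaquetteWord (x, μ, ν))) =
      Matrix.trace ((U (x, ν) : Matrix (Fin N) (Fin N) ℂ)ᴴ
        * (U (shift x ν, μ) : Matrix (Fin N) (Fin N) ℂ)ᴴ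
        * (U (shift x μ, ν) : Matrix (Fin N) (Fin N) ℂ)
        * (U (x, μ) : Matrix (Fin N) (Fin N) ℂ)) := by
  rw [Matrix.mul_assoc _ _ (U (x, μ) : Matrix (Fin N) (Fin N) ℂ), Matrix.trace_mul_comm]
  simp only [wordTrace, wordMatrix, plaquetteWord, plaquetteEdge, plaquetteTail,
    FreeGroup.lift_mk]
  simp [Matrix.star_eq_conjTranspose, Matrix.mul_assoc]

omit [NeZero L] in
lemma wordTrace_plaquetteWord_swap {N : ℕ} (U : Conf D L N) (x : Site D L) (μ ν : Fin D) :
    wordTrace U (FreeGroup.mk (plaquetteWord (x, ν, μ))) =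
      starRingEnd ℂ (wordTrace U (FreeGroup.mk (plaquetteWord (x, μ, ν)))) := by
  rw [← wordTrace_inv, FreeGroup.inv_mk, invRev_plaquetteWord]
  rfl

lemma sum_offDiag_eq_sum_filter_lt {M : Type*} [AddCommMonoid M] (f : Fin D × Fin D → M) :
    ∑ p ∈ Finset.univ.offDiag, f p =
      ∑ p ∈ Finset.univ.filter (fun p : Fin D × Fin D => p.1 < p.2), (f p + f p.swap) := by
  rw [Finset.sum_add_distrib,
    ← Finset.sum_filter_add_sum_filter_not _ (fun p : Fin D × Fin D => p.1 < p.2)]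
  congr 1
  · refine Finset.sum_congr (Finset.ext fun p => ?_) fun _ _ => rfl
    simpa using fun h : p.1 < p.2 => h.ne
  · refine Finset.sum_nbij' Prod.swap Prod.swap ?_ ?_ ?_ ?_ ?_ <;>
      simp +contextual [lt_iff_le_and_ne, eq_comm]

lemma natCast_mul_wilsonAction {N : ℕ} (hN : 0 < N) (U : Conf D L N) :
    ((N * wilsonAction D L N U : ℝ) : ℂ) = ((2 * (L : ℝ) ^ D)⁻¹ : ℝ) *
      ∑ p ∈ orientedPlaquettes D L, wordTrace U (FreeGroup.mk (plaquetteWord p)) := by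
  have hN' : (N : ℂ) ≠ 0 := by exact_mod_cast hN.ne'
  have hsum : ∑ p ∈ orientedPlaquettes D L, wordTrace U (FreeGroup.mk (plaquetteWord p)) =
      2 * ∑ x : Site D L, ∑ p ∈ Finset.univ.filter (fun p : Fin D × Fin D => p.1 < p.2),
        ((wordTrace U (FreeGroup.mk (plaquetteWord (x, p.1, p.2)))).re : ℂ) := by
    rw [orientedPlaquettes, Finset.sum_product, Finset.mul_sum]
    refine Finset.sum_congr rfl fun x _ => ?_
    rw [sum_offDiag_eq_sum_filter_lt, Finset.mul_sum]
    refine Finset.sum_congr rfl fun p _ => ?_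
    rw [Prod.swap, wordTrace_plaquetteWord_swap U x p.1 p.2, Complex.add_conj]
    push_cast
    rfl
  rw [hsum, wilsonAction]
  simp only [← wordTrace_plaquetteWord, ← Finset.mul_sum]
  push_cast
  field_simp

lemma continuous_wilsonAction (N : ℕ) : Continuous (wilsonAction D L N) := by
  change Continuous fun U => wilsonAction D L N U
  simp only [wilsonAction, ← wordTrace_plaquetteWord]
  exact continuous_const.mul (continuous_finsetSum _ fun x _ => continuous_finsetSum _ fun p _ =>
    continuous_const.mul (Complex.continuous_re.comp (continuous_wordTrace _)))

end WilsonAction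

/-- **Concentration of the lattice Yang–Mills action.**
If `μ_N` is the product over all edges of the Haar probability measures on `U(N)` and
`ρ_N` is the pushforward of `μ_N` by the normalized Wilson action `t`, then the rescaled
measures `ρ_N(N t)` — i.e. the pushforwards of `μ_N` under `N·t` — converge weakly, as
`N → ∞`, to the centered Gaussian of variance `D(D-1)/(4K)`, whose density is
`√(2K/(π D(D−1))) · exp(−2K t²/(D(D−1)))`. -/
theorem wilson_action_law_tendsto_gaussian
    (D L : ℕ) [NeZero L] (hD : 2 ≤ D) (hL : 1 ≤ L)
    (haarU : ∀ N : ℕ, Measure (Matrix.unitaryGroup (Fin N) ℂ))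
    [∀ N, (haarU N).IsHaarMeasure] [∀ N, IsProbabilityMeasure (haarU N)] :
    ∀ f : BoundedContinuousFunction ℝ ℝ,
      Tendsto
        (fun N : ℕ => ∫ t, f t ∂((confMeasure D L N (haarU N)).map
          (fun U => (N : ℝ) * wilsonAction D L N U)))
        atTop
        (nhds (∫ t, f t ∂(gaussianReal 0
          (((D * (D - 1) : ℕ) : ℝ≥0) / ((4 * L ^ D : ℕ) : ℝ≥0))))) := by
  have hL0 : (L : ℝ) ^ D ≠ 0 := pow_ne_zero _ (Nat.cast_ne_zero.2 (NeZero.ne L))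
  have hmeas : ∀ N : ℕ, AEMeasurable (fun U => (N : ℝ) * wilsonAction D L N U)
      (confMeasure D L N (haarU N)) := fun N =>
    ((continuous_wilsonAction N).const_mul _).measurable.aemeasurable
  have hprob : ∀ N : ℕ, IsProbabilityMeasure (confMeasure D L N (haarU N)) := fun N =>
    inferInstanceAs (IsProbabilityMeasure (Measure.pi _))
  let ν : ℕ → ProbabilityMeasure ℝ := fun N =>
    ⟨_, Measure.isProbabilityMeasure_map (hmeas N)⟩
  let γ : ProbabilityMeasure ℝ := ⟨gaussianReal 0
    (((D * (D - 1) : ℕ) : ℝ≥0) / ((4 * L ^ D : ℕ) : ℝ≥0)), inferInstance⟩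
  obtain ⟨C, hC⟩ := exists_bound_stein (orientedPlaquettes D L) plaquetteEdge plaquetteTail
    (fun p hp _ hc => mk_ne_one_of_mem_cuts_plaquetteTail (mem_orientedPlaquettes.1 hp) hc)
    (fun p hp => sum_mergeCoeff_plaquetteWord hp) (2 * (L : ℝ) ^ D)⁻¹
  refine ProbabilityMeasure.tendsto_iff_forall_integral_tendsto.1
    (tendsto_of_stein (ν := ν) (γ := γ) (ε := fun N => C / N) rfl
      (fun N => ?_) (tendsto_const_div_atTop_nhds_zero_nat C) ?_)
  · exact (integrable_map_measure aestronglyMeasurable_id (hmeas N)).2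
      (Continuous.integrable_pi_unitary (haarU N) ((continuous_wilsonAction N).const_mul _))
  · filter_upwards [eventually_gt_atTop 0] with N hN s
    have hvar : (((((D * (D - 1) : ℕ) : ℝ≥0) / ((4 * L ^ D : ℕ) : ℝ≥0) : ℝ≥0) : ℝ) : ℂ) =
        (((2 * (L : ℝ) ^ D)⁻¹ : ℝ) : ℂ) ^ 2 * #(orientedPlaquettes D L) := by
      rw [card_orientedPlaquettes]
      have hL1 : (L : ℂ) ^ D ≠ 0 := by exact_mod_cast hL0
      generalize D * (D - 1) = m
      push_cast
      field_simp
      norm_num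
    have h := hC N (haarU N) (fun U => N * wilsonAction D L N U) s hN
      fun U => natCast_mul_wilsonAction hN U
    rw [hvar, charFun_apply_real]
    change ‖∫ x, _ ∂(Measure.map _ _) - _ * ∫ x, _ ∂(Measure.map _ _)‖ ≤ _
    rw [integral_map (hmeas N) (by fun_prop), integral_map (hmeas N) (by fun_prop)]
    exact h

end
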